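/- arXiv:1404.7065 — 3 statements merged into one kernel-verified Lean document; each statement's English description precedes it below -/
import Mathlib

section
/- Let A ∈ (0,1), let w ∈ ℂ satisfy Re w > √(1−A²) and |Im w| < A, let α ∈ [A,1), set ρ = (1−α²)^{1/2}, C = √((1+A)/(1−A)), and let B(α,w) be the real 2×2 matrix (1/ρ)·[[(1−α)·Re w, −(1−α)·Im w], [(1+α)·Im w, (1+α)·Re w]]. If x, y ∈ ℝ satisfy y > C·|x| and (x̃, ỹ) = B(α,w)·(x, y), then ỹ > C·|x̃|. -/
/-- **Cone invariance for the conjugated Szegő transfer matrix** (Lemma 2.2(a)).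
If `A ∈ (0,1)`, `Re w > √(1−A²)`, `|Im w| < A`, `α ∈ [A,1)`,
`ρ = (1−α²)^{1/2}`, `C = √((1+A)/(1−A))`, and `(x̃, ỹ) = B(α,w)·(x,y)` where
`B(α,w) = (1/ρ)·[[(1−α)Re w, −(1−α)Im w], [(1+α)Im w, (1+α)Re w]]`,
then `y > C·|x|` implies `ỹ > C·|x̃|`. -/
theorem szego_cone_invariance
    (A : ℝ) (hA : A ∈ Set.Ioo (0 : ℝ) 1)
    (w : ℂ) (hwre : Real.sqrt (1 - A ^ 2) < w.re) (hwim : |w.im| < A)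
    (α : ℝ) (hα : α ∈ Set.Ico A 1)
    (ρ C : ℝ) (hρ : ρ = Real.sqrt (1 - α ^ 2)) (hC : C = Real.sqrt ((1 + A) / (1 - A)))
    (x y : ℝ) (hxy : y > C * |x|)
    (v : Fin 2 → ℝ)
    (hv : v = Matrix.mulVec
      ((1 / ρ) • !![(1 - α) * w.re, -((1 - α) * w.im); (1 + α) * w.im, (1 + α) * w.re])
      ![x, y]) :
    v 1 > C * |v 0| := by
  obtain ⟨hA0, hA1⟩ := hA
  obtain ⟨hα0, hα1⟩ := hα
  have h1A : 0 < 1 - A := by linarith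
  have hCpos : 0 < C := by rw [hC]; exact Real.sqrt_pos.2 (by positivity)
  have hC2 : C ^ 2 * (1 - A) = 1 + A := by
    rw [hC, Real.sq_sqrt (by positivity)]; field_simp
  have hρpos : 0 < ρ := by rw [hρ]; exact Real.sqrt_pos.2 (by nlinarith)
  have hq : Real.sqrt (1 - A ^ 2) = C * (1 - A) := by
    rw [Real.sqrt_eq_iff_mul_self_eq (by nlinarith) (by positivity)]
    linear_combination (-(1 - A)) * hC2
  rw [hq] at hwre
  have hv0 : v 0 = (1 / ρ) * ((1 - α) * (w.re * x - w.im * y)) := by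
    rw [hv]; simp [Matrix.mulVec, dotProduct, Fin.sum_univ_two]; ring
  have hv1 : v 1 = (1 / ρ) * ((1 + α) * (w.im * x + w.re * y)) := by
    rw [hv]; simp [Matrix.mulVec, dotProduct, Fin.sum_univ_two]; ring
  clear hv hq hC hρ
  generalize w.re = r at *
  generalize w.im = s at *
  have h1α : 0 < 1 - α := by linarith
  have hα : 0 < α := by linarith
  have hr : 0 < r := lt_trans (by positivity) hwre
  have hs : 0 ≤ |s| := abs_nonneg s
  have hx : 0 ≤ |x| := abs_nonneg x
  have hy : 0 < y := lt_of_le_of_lt (by positivity) hxy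
  have hCr : 1 + A < C * r := by nlinarith
  have hCα : C ^ 2 * (1 - α) ≤ 1 + α := by nlinarith [sq_nonneg C]
  have key : |s| * (1 + α) ≤ C * r * α := by nlinarith
  set P := (1 + α) * r - C * (1 - α) * |s| with hP
  set Q := (1 + α) * |s| + C * (1 - α) * r with hQ
  have hPQ : Q ≤ C * P := by
    have := mul_le_mul_of_nonneg_left hCα hs
    rw [hP, hQ]; nlinarith
  have hQpos : 0 < Q := by positivity
  have hPpos : 0 < P := by
    by_contra h
    push Not at h
    nlinarith
  have hmain : |x| * Q < y * P := by
    have h1 := mul_lt_mul_of_pos_right hxy hPpos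
    have h2 := mul_le_mul_of_nonneg_left hPQ hx
    nlinarith
  have e1 : |r * x - s * y| ≤ r * |x| + |s| * y := by
    have := abs_sub (r * x) (s * y)
    rwa [abs_mul, abs_mul, abs_of_pos hr, abs_of_pos hy] at this
  have e2 : -(|s| * |x|) ≤ s * x := by
    rw [← abs_mul]; exact neg_abs_le _
  rw [hv0, hv1, abs_mul, abs_mul, abs_of_pos h1α, abs_of_pos (by positivity : 0 < 1 / ρ)]
  have e3 : C * (1 - α) * |r * x - s * y| ≤ C * (1 - α) * (r * |x| + |s| * y) :=
    mul_le_mul_of_nonneg_left e1 (by positivity)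
  have e4 : (1 + α) * -(|s| * |x|) ≤ (1 + α) * (s * x) :=
    mul_le_mul_of_nonneg_left e2 (by positivity)
  have fin : C * (1 - α) * |r * x - s * y| < (1 + α) * (s * x + r * y) := by
    rw [hP, hQ] at hmain
    linarith
  have := mul_lt_mul_of_pos_left fin (by positivity : 0 < 1 / ρ)
  linarith
end

section
/- Let (J_j)_{j≥1} be a sequence of positive real numbers, let τ > 0 and k_B > 0, and suppose α ∈ (0,1) satisfies α ≤ e^{−2J_j/(k_B·τ)} for all j ≥ 1. Then for every N ≥ 1 and every H ∈ ℂ with e^{2H/(k_B·τ)} ∈ R_α, the partition function satisfies Z_τ^{(N)}(H) ≠ 0. -/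
noncomputable section

/-- The spin value `±1` of a Boolean configuration entry. -/
def spinC (b : Bool) : ℂ := if b then 1 else -1

/-- The cyclic successor on `Fin N` (periodic boundary conditions
`σ_{N+1} = σ_1`). -/
def nextIdx {N : ℕ} (j : Fin N) : Fin N := ⟨(j.val + 1) % N, Nat.mod_lt _ j.pos⟩

/-- The partition function of the one-dimensional ferromagnetic
nearest-neighbor Ising model on `N` sites with couplings `J_1, …, J_N`,
temperature `τ`, Boltzmann constant `k_B`, (complex) magnetic field `H` and
periodic boundary conditions:
`Z_τ^{(N)}(H) = Σ_{σ ∈ {±1}^N} exp((1/(k_B τ)) Σ_j (J_j σ_j σ_{j+1} + H σ_j))`. -/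
def isingZ (N : ℕ) (J : ℕ → ℝ) (kB τ : ℝ) (H : ℂ) : ℂ :=
  ∑ σ : Fin N → Bool,
    Complex.exp ((1 / ((kB * τ : ℝ) : ℂ)) *
      ∑ j : Fin N,
        (((J (j.val + 1) : ℝ) : ℂ) * spinC (σ j) * spinC (σ (nextIdx j)) + H * spinC (σ j)))

/-- The open arc `R_a = {e^{iθ} : −2 arcsin a < θ < 2 arcsin a}` around 1. -/
def arcR (a : ℝ) : Set ℂ :=
  {z | ∃ θ : ℝ, -(2 * Real.arcsin a) < θ ∧ θ < 2 * Real.arcsin a ∧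
    z = Complex.exp (θ * Complex.I)}

end

/-- Ordered product `T 0 * T 1 * ... * T (n-1)`. -/
def isingProd (T : ℕ → Matrix Bool Bool ℂ) : ℕ → Matrix Bool Bool ℂ
  | 0 => 1
  | n + 1 => isingProd T n * T n

lemma isingProd_chain (T : ℕ → Matrix Bool Bool ℂ) (n : ℕ) (X : Bool → Bool → ℂ) :
    ∑ σ : Fin (n + 1) → Bool, (∏ j : Fin n, T j (σ j.castSucc) (σ j.succ)) *
        X (σ 0) (σ (Fin.last n))
      = ∑ a, ∑ b, isingProd T n a b * X a b := by
  induction n generalizing X with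
  | zero =>
    rw [← (Equiv.funUnique (Fin 1) Bool).symm.sum_comp]
    simp [isingProd, Matrix.one_apply]
  | succ n ih =>
    rw [← (Fin.snocEquiv (fun _ : Fin (n + 2) => Bool)).sum_comp, Fintype.sum_prod_type,
      Finset.sum_comm]
    have h := ih (fun a b => ∑ x, T n b x * X a x)
    have e : ∀ (σ : Fin (n + 1) → Bool) (x : Bool),
        (∏ j : Fin (n + 1), T j ((Fin.snocEquiv (fun _ : Fin (n + 2) => Bool)) (x, σ) j.castSucc)
          ((Fin.snocEquiv (fun _ : Fin (n + 2) => Bool)) (x, σ) j.succ)) *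
          X ((Fin.snocEquiv (fun _ : Fin (n + 2) => Bool)) (x, σ) 0)
          ((Fin.snocEquiv (fun _ : Fin (n + 2) => Bool)) (x, σ) (Fin.last (n + 1)))
        = (∏ j : Fin n, T j (σ j.castSucc) (σ j.succ)) *
          (T n (σ (Fin.last n)) x * X (σ 0) x) := by
      intro σ x
      have h0 : (Fin.snoc (α := fun _ => Bool) σ x : Fin (n + 2) → Bool) 0 = σ 0 := by
        have := Fin.snoc_castSucc (α := fun _ => Bool) x σ 0
        simpa using this
      have h1 : ∀ j : Fin n, (Fin.snoc (α := fun _ => Bool) σ x : Fin (n + 2) → Bool)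
          j.castSucc.succ = σ j.succ := by
        intro j
        rw [Fin.succ_castSucc]
        exact Fin.snoc_castSucc (α := fun _ => Bool) x σ j.succ
      rw [Fin.prod_univ_castSucc]
      simp only [Fin.snocEquiv_apply, Fin.snoc_castSucc, h0, h1, Fin.succ_last, Fin.snoc_last,
        Fin.val_castSucc, Fin.val_last]
      ring
    simp_rw [e, ← Finset.mul_sum]
    rw [h]
    simp only [isingProd, Matrix.mul_apply, Fintype.sum_bool]
    ring

lemma isingProd_trace (T : ℕ → Matrix Bool Bool ℂ) (n : ℕ) :
    ∑ σ : Fin (n + 1) → Bool, ∏ j : Fin (n + 1), T j (σ j) (σ (nextIdx j))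
      = (isingProd T (n + 1)).trace := by
  have h := isingProd_chain T n (fun a b => T n b a)
  have e : ∀ σ : Fin (n + 1) → Bool, ∏ j : Fin (n + 1), T j (σ j) (σ (nextIdx j)) =
      (∏ j : Fin n, T j (σ j.castSucc) (σ j.succ)) * T n (σ (Fin.last n)) (σ 0) := by
    intro σ
    have h1 : ∀ j : Fin n, nextIdx j.castSucc = j.succ := by
      intro j
      apply Fin.ext
      simp [nextIdx]
    have h2 : nextIdx (Fin.last n) = 0 := by
      apply Fin.ext
      simp [nextIdx]
    rw [Fin.prod_univ_castSucc]
    simp only [h1, h2, Fin.val_castSucc, Fin.val_last]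
  simp_rw [e]
  rw [h]
  simp only [isingProd, Matrix.mul_apply, Matrix.trace, Matrix.diag, Fintype.sum_bool]

/-- If the transfer matrices are simultaneously similar, up to a scalar, to real matrices with
nonnegative entries and positive diagonal, then the trace of their product is nonzero. -/
lemma isingProd_trace_ne_zero (T : ℕ → Matrix Bool Bool ℂ) (P Q : Matrix Bool Bool ℂ)
    (hPQ : P * Q = 1) (ε : ℂ) (hε : ε ≠ 0) (B : ℕ → Matrix Bool Bool ℝ)
    (hB : ∀ n a b, 0 < B n a b)
    (hT : ∀ n, T n * P = P * (ε • (B n).map Complex.ofReal)) (n : ℕ) :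
    (isingProd T n).trace ≠ 0 := by
  have key : ∃ W : Matrix Bool Bool ℝ, (∀ a b, 0 ≤ W a b) ∧ (∀ a, 0 < W a a) ∧
      isingProd T n * P = P * (ε ^ n • W.map Complex.ofReal) := by
    induction n with
    | zero =>
      refine ⟨1, ?_, ?_, ?_⟩
      · intro a b
        rw [Matrix.one_apply]
        split_ifs <;> norm_num
      · intro a
        simp
      · simp [isingProd]
    | succ n ih =>
      obtain ⟨W, h0, h1, h2⟩ := ih
      refine ⟨W * B n, ?_, ?_, ?_⟩
      · intro a b
        rw [Matrix.mul_apply]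
        exact Finset.sum_nonneg fun i _ => mul_nonneg (h0 _ _) (hB _ _ _).le
      · intro a
        rw [Matrix.mul_apply]
        exact Finset.sum_pos' (fun i _ => mul_nonneg (h0 _ _) (hB _ _ _).le)
          ⟨a, Finset.mem_univ _, mul_pos (h1 _) (hB _ _ _)⟩
      · have hm : (W * B n).map Complex.ofReal = W.map Complex.ofReal * (B n).map Complex.ofReal :=
          Matrix.map_mul (f := Complex.ofRealHom)
        rw [isingProd, Matrix.mul_assoc, hT, ← Matrix.mul_assoc, h2, hm, Matrix.mul_assoc,
          Matrix.smul_mul, Matrix.mul_smul (W.map Complex.ofReal), smul_smul, pow_succ]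
  obtain ⟨W, h0, h1, h2⟩ := key
  have ht : (isingProd T n).trace = ε ^ n * ((W.trace : ℝ) : ℂ) := by
    have e1 : isingProd T n = P * (ε ^ n • W.map Complex.ofReal) * Q := by
      rw [← h2, Matrix.mul_assoc, hPQ, Matrix.mul_one]
    rw [e1, Matrix.trace_mul_comm, ← Matrix.mul_assoc, mul_eq_one_comm.mp hPQ, Matrix.one_mul,
      Matrix.trace_smul]
    simp [Matrix.trace]
  rw [ht]
  have : 0 < W.trace := Finset.sum_pos (fun i _ => h1 i) Finset.univ_nonempty
  exact mul_ne_zero (pow_ne_zero _ hε) (Complex.ofReal_ne_zero.mpr (ne_of_gt this))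

/-- **No Lee–Yang zeros in the arc `R_α`** (Theorem 4.1). Let `(J_j)_{j≥1}` be
positive couplings, `τ, k_B > 0`, and suppose `α ∈ (0,1)` satisfies
`α ≤ e^{−2J_j/(k_B τ)}` for all `j ≥ 1`. Then for every `N ≥ 1` and every
`H ∈ ℂ` with `e^{2H/(k_B τ)} ∈ R_α`, the partition function `Z_τ^{(N)}(H)` is
nonzero. -/
theorem ising_partition_ne_zero_on_arc
    (J : ℕ → ℝ) (hJ : ∀ j, 1 ≤ j → 0 < J j)
    (τ kB : ℝ) (hτ : 0 < τ) (hkB : 0 < kB)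
    (α : ℝ) (hα : α ∈ Set.Ioo (0 : ℝ) 1)
    (hαJ : ∀ j, 1 ≤ j → α ≤ Real.exp (-2 * J j / (kB * τ)))
    (N : ℕ) (hN : 1 ≤ N) (H : ℂ)
    (hH : Complex.exp (2 * H / ((kB * τ : ℝ) : ℂ)) ∈ arcR α) :
    isingZ N J kB τ H ≠ 0 := by
  obtain ⟨θ, hθ1, hθ2, hz⟩ := hH
  obtain ⟨n, rfl⟩ : ∃ n, N = n + 1 := ⟨N - 1, by omega⟩
  have hkt : 0 < kB * τ := mul_pos hkB hτ
  set β : ℝ := kB * τ with hβ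
  have hβC : (β : ℂ) ≠ 0 := Complex.ofReal_ne_zero.mpr hkt.ne'
  set φ : ℝ := θ / 2 with hφ
  have hαpi : Real.arcsin α ≤ Real.pi / 2 := Real.arcsin_le_pi_div_two α
  have hφ1 : -Real.arcsin α < φ := by rw [hφ]; linarith
  have hφ2 : φ < Real.arcsin α := by rw [hφ]; linarith
  have hc : 0 < Real.cos φ := Real.cos_pos_of_mem_Ioo ⟨by linarith, by linarith⟩
  have hsα : Real.sin (Real.arcsin α) = α :=
    Real.sin_arcsin (by linarith [hα.1]) hα.2.le
  have hs2 : Real.sin φ < α := by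
    rw [← hsα]
    exact Real.sin_lt_sin_of_lt_of_le_pi_div_two (by linarith) hαpi hφ2
  have hs1 : -α < Real.sin φ := by
    rw [← hsα, ← Real.sin_neg]
    exact Real.sin_lt_sin_of_lt_of_le_pi_div_two (by linarith) (by linarith) hφ1
  -- the square root of the unit complex number
  set u : ℂ := Complex.exp ((φ / 2 : ℝ) * Complex.I) with hu
  have hu0 : u ≠ 0 := Complex.exp_ne_zero _
  have hu2 : u ^ 2 = Complex.exp (φ * Complex.I) := by
    rw [hu, ← Complex.exp_nat_mul]
    congr 1
    push_cast
    ring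
  have hu2' : u ^ 2 = (Real.cos φ : ℂ) + (Real.sin φ : ℂ) * Complex.I := by
    rw [hu2, Complex.exp_mul_I, Complex.ofReal_cos, Complex.ofReal_sin]
  have hui2' : u⁻¹ ^ 2 = (Real.cos φ : ℂ) - (Real.sin φ : ℂ) * Complex.I := by
    rw [inv_pow, hu2, ← Complex.exp_neg, ← neg_mul, Complex.exp_mul_I, Complex.cos_neg,
      Complex.sin_neg, Complex.ofReal_cos, Complex.ofReal_sin]
    ring
  set z : ℂ := Complex.exp (H / (β : ℂ)) with hzdef
  have hz2 : z ^ 2 = (u ^ 2) ^ 2 := by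
    rw [hu2, hzdef, ← Complex.exp_nat_mul, ← Complex.exp_nat_mul]
    have e1 : ((2 : ℕ) : ℂ) * (H / (β : ℂ)) = 2 * H / (β : ℂ) := by push_cast; ring
    rw [e1, hz]
    congr 1
    rw [hφ]
    push_cast
    ring
  obtain ⟨ε, hε, hzε⟩ : ∃ ε : ℂ, ε ^ 2 = 1 ∧ z = ε * u ^ 2 := by
    rcases sq_eq_sq_iff_eq_or_eq_neg.mp hz2 with h | h
    · exact ⟨1, by norm_num, by rw [h]; ring⟩
    · exact ⟨-1, by norm_num, by rw [h]; ring⟩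
  have hε0 : ε ≠ 0 := by
    rintro rfl
    norm_num at hε
  have hεi : ε⁻¹ = ε := by
    field_simp
    exact hε.symm
  have hzi : z⁻¹ = ε * u⁻¹ ^ 2 := by
    rw [hzε, mul_inv, hεi, inv_pow]
  set p : ℕ → ℝ := fun j => Real.exp (J (j + 1) / β) with hp
  set q : ℕ → ℝ := fun j => Real.exp (-(J (j + 1) / β)) with hq
  have hppos : ∀ j, 0 < p j := fun j => Real.exp_pos _
  have hpq : ∀ j, p j * α ≤ q j := by
    intro j
    have h := hαJ (j + 1) (by omega)
    calc p j * α ≤ p j * Real.exp (-2 * J (j + 1) / β) :=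
          mul_le_mul_of_nonneg_left h (hppos j).le
      _ = q j := by
          simp only [hp, hq]
          rw [← Real.exp_add]
          congr 1
          ring
  let T : ℕ → Matrix Bool Bool ℂ := fun j a b =>
    Complex.exp ((1 / (β : ℂ)) * (((J (j + 1) : ℝ) : ℂ) * spinC a * spinC b + H * spinC a))
  have hZ : isingZ (n + 1) J kB τ H = (isingProd T (n + 1)).trace := by
    rw [← isingProd_trace, isingZ]
    refine Finset.sum_congr rfl fun σ _ => ?_
    rw [Finset.mul_sum, Complex.exp_sum]
  rw [hZ]
  have hTtt : ∀ j, T j true true = p j * (ε * u ^ 2) := by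
    intro j
    simp only [T, spinC, hp, if_true]
    rw [← hzε, hzdef, Complex.ofReal_exp, ← Complex.exp_add]
    congr 1
    push_cast
    ring
  have hTtf : ∀ j, T j true false = q j * (ε * u ^ 2) := by
    intro j
    simp only [T, spinC, hq, if_true, Bool.false_eq_true, if_false]
    rw [← hzε, hzdef, Complex.ofReal_exp, ← Complex.exp_add]
    congr 1
    push_cast
    ring
  have hTft : ∀ j, T j false true = q j * (ε * u⁻¹ ^ 2) := by
    intro j
    simp only [T, spinC, hq, if_true, Bool.false_eq_true, if_false]
    rw [← hzi, hzdef, ← Complex.exp_neg, Complex.ofReal_exp, ← Complex.exp_add]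
    congr 1
    push_cast
    ring
  have hTff : ∀ j, T j false false = p j * (ε * u⁻¹ ^ 2) := by
    intro j
    simp only [T, spinC, hp, Bool.false_eq_true, if_false]
    rw [← hzi, hzdef, ← Complex.exp_neg, Complex.ofReal_exp, ← Complex.exp_add]
    congr 1
    push_cast
    ring
  let P : Matrix Bool Bool ℂ := fun a b =>
    (if a then u else u⁻¹) * (if a = b then 1 else Complex.I)
  let Q : Matrix Bool Bool ℂ := fun a b =>
    (if b then u⁻¹ else u) * (if a = b then 1 else -Complex.I) / 2
  let B : ℕ → Matrix Bool Bool ℝ := fun j a b =>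
    if a = b then p j * Real.cos φ
    else if a then q j - p j * Real.sin φ else q j + p j * Real.sin φ
  have hI : Complex.I ^ 2 = -1 := Complex.I_sq
  have huu : u * u⁻¹ = 1 := mul_inv_cancel₀ hu0
  refine isingProd_trace_ne_zero T P Q ?_ ε hε0 B ?_ ?_ (n + 1)
  · ext a b
    rw [Matrix.mul_apply, Fintype.sum_bool]
    cases a <;> cases b <;> simp [P, Q] <;> grind
  · intro j a b
    have h1 : p j * Real.sin φ < p j * α := mul_lt_mul_of_pos_left hs2 (hppos j)
    have h2 : p j * (-α) < p j * Real.sin φ := mul_lt_mul_of_pos_left hs1 (hppos j)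
    have h3 := hpq j
    have h4 := mul_pos (hppos j) hc
    cases a <;> cases b <;> simp only [B] <;> simp <;> linarith
  · intro j
    ext a b
    rw [Matrix.mul_apply, Matrix.mul_apply, Fintype.sum_bool, Fintype.sum_bool]
    generalize hC : (Real.cos φ : ℂ) = C at hu2' hui2'
    generalize hS : (Real.sin φ : ℂ) = S at hu2' hui2'
    generalize hv : u⁻¹ = v at *
    have hBtt : B j true true = p j * Real.cos φ := by simp [B]
    have hBff : B j false false = p j * Real.cos φ := by simp [B]
    have hBtf : B j true false = q j - p j * Real.sin φ := by simp [B]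
    have hBft : B j false true = q j + p j * Real.sin φ := by simp [B]
    have hPtt : P true true = u := by simp [P]
    have hPtf : P true false = u * Complex.I := by simp [P]
    have hPft : P false true = v * Complex.I := by simp [P, hv]
    have hPff : P false false = v := by simp [P, hv]
    cases a <;> cases b <;>
      simp only [hTtt, hTtf, hTft, hTff, hPtt, hPtf, hPft, hPff, Matrix.smul_apply,
        Matrix.map_apply, hBtt, hBtf, hBft, hBff, smul_eq_mul, Complex.ofReal_mul,
        Complex.ofReal_add, Complex.ofReal_sub, hC, hS]
    · linear_combination (q j * ε * v * Complex.I) * huu + (p j * ε * v) * hui2'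
    · linear_combination (q j * ε * v) * huu + (p j * ε * v * Complex.I) * hui2'
        - (p j * ε * v * S) * hI
    · linear_combination (q j * ε * u) * huu + (p j * ε * u * Complex.I) * hu2'
        + (p j * ε * u * S) * hI
    · linear_combination (q j * ε * u * Complex.I) * huu + (p j * ε * u) * hu2'
end

section
/- Let (J_j)_{j≥1} be a bounded sequence of positive real numbers, let τ > 0 and k_B > 0. Then there exists an open neighborhood 𝒩 ⊆ ℂ of 1 such that for every N ≥ 1 and every H ∈ ℂ with e^{2H/(k_B·τ)} ∈ 𝒩, the partition function satisfies Z_τ^{(N)}(H) ≠ 0. -/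
/-- One-step transfer matrix. -/
noncomputable def trM (J : ℕ → ℝ) (β : ℂ) (H : ℂ) (k : ℕ) : Matrix Bool Bool ℂ :=
  fun s s' => Complex.exp (β * (((J (k + 1) : ℝ) : ℂ) * spinC s * spinC s' + H * spinC s))

/-- Products of the first matrices. -/
noncomputable def prM (M : ℕ → Matrix Bool Bool ℂ) : ℕ → Matrix Bool Bool ℂ
  | 0 => 1
  | n + 1 => prM M n * M n

theorem path_sum (M : ℕ → Matrix Bool Bool ℂ) (n : ℕ) : ∀ f : Bool → Bool → ℂ,
    ∑ σ : Fin (n + 1) → Bool,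
      (∏ j : Fin n, M j (σ j.castSucc) (σ j.succ)) * f (σ 0) (σ (Fin.last n))
      = ∑ s, ∑ s', prM M n s s' * f s s' := by
  induction n with
  | zero =>
    intro f
    rw [← (Equiv.funUnique (Fin 1) Bool).symm.sum_comp]
    simp [prM, Matrix.one_apply]
  | succ n ih =>
    intro f
    rw [← (Fin.snocEquiv (fun _ : Fin (n + 2) => Bool)).sum_comp, Fintype.sum_prod_type,
      Finset.sum_comm]
    have h := ih (fun a b => ∑ s', M n b s' * f a s')
    have e : ∀ (σ : Fin (n + 1) → Bool) (b : Bool),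
        (∏ j : Fin (n + 1), M j ((Fin.snoc σ b : Fin (n + 2) → Bool) j.castSucc)
          ((Fin.snoc σ b : Fin (n + 2) → Bool) j.succ)) *
          f ((Fin.snoc σ b : Fin (n + 2) → Bool) 0)
            ((Fin.snoc σ b : Fin (n + 2) → Bool) (Fin.last (n + 1)))
        = (∏ j : Fin n, M j (σ j.castSucc) (σ j.succ)) *
          (M n (σ (Fin.last n)) b * f (σ 0) b) := by
      intro σ b
      have h0 : (Fin.snoc σ b : Fin (n + 2) → Bool) 0 = σ 0 := by
        rw [← Fin.castSucc_zero, Fin.snoc_castSucc (α := fun _ => Bool)]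
      rw [Fin.prod_univ_castSucc, h0, Fin.snoc_last (α := fun _ => Bool), Fin.succ_last,
        Fin.snoc_last (α := fun _ => Bool)]
      simp only [Fin.succ_castSucc, Fin.snoc_castSucc (α := fun _ => Bool)]
      simp [mul_assoc]
    refine Eq.trans (Finset.sum_congr rfl fun σ _ => ?_) (h.trans ?_)
    · rw [Finset.mul_sum]
      exact Finset.sum_congr rfl fun b _ => e σ b
    · simp [prM, Matrix.mul_apply]
      ring

theorem isingZ_trace (n : ℕ) (J : ℕ → ℝ) (kB τ : ℝ) (H : ℂ) :
    isingZ (n + 1) J kB τ H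
      = (prM (trM J (1 / ((kB * τ : ℝ) : ℂ)) H) (n + 1)).trace := by
  have h := path_sum (trM J (1 / ((kB * τ : ℝ) : ℂ)) H) n
    (fun a b => trM J (1 / ((kB * τ : ℝ) : ℂ)) H n b a)
  have : (prM (trM J (1 / ((kB * τ : ℝ) : ℂ)) H) (n + 1)).trace = _ :=
    Eq.trans (by simp [prM, Matrix.trace, Matrix.mul_apply]) h.symm
  rw [this]
  unfold isingZ
  refine Finset.sum_congr rfl fun σ _ => ?_
  rw [Finset.mul_sum, Complex.exp_sum, Fin.prod_univ_castSucc]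
  have h1 : ∀ j : Fin n, nextIdx j.castSucc = j.succ := by
    intro j
    ext
    simp only [nextIdx, Fin.val_castSucc, Fin.val_succ]
    exact Nat.mod_eq_of_lt (by omega)
  have h2 : nextIdx (Fin.last n) = 0 := by
    ext
    simp [nextIdx]
  simp only [h1, h2]
  rfl

/-- The closed cone. -/
def inC (v : Bool → ℂ) : Prop :=
  0 < (v true * star (v false)).re ∧ |(v true * star (v false)).im| ≤ (v true * star (v false)).re

/-- The open cone. -/
def inC' (v : Bool → ℂ) : Prop :=
  |(v true * star (v false)).im| < (v true * star (v false)).re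

theorem inC'.inC {v : Bool → ℂ} (h : inC' v) : inC v :=
  ⟨lt_of_le_of_lt (abs_nonneg _) h, le_of_lt h⟩

theorem inC'_smul {v : Bool → ℂ} (c : ℂ) (hc : c ≠ 0) : inC' (c • v) ↔ inC' v := by
  have h : (c • v) true * star ((c • v) false)
      = ((Complex.normSq c : ℝ) : ℂ) * (v true * star (v false)) := by
    rw [Complex.normSq_eq_conj_mul_self]
    simp
    ring
  have hp := Complex.normSq_pos.2 hc
  unfold inC'
  rw [h, Complex.re_ofReal_mul, Complex.im_ofReal_mul, abs_mul, abs_of_pos hp]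
  exact mul_lt_mul_iff_right₀ hp

set_option maxHeartbeats 1000000 in
theorem cone_step (t a b : ℝ) (ht : 0 < t) (ht1 : t < 1) (ha : 0 < a) (hab : b ≤ a)
    (hb : t * a ≤ b) (h : ℂ) (hh : ‖h - 1‖ < (1 - (1 - t) / (1 + t)) / 4)
    (u v : ℂ) (h0 : 0 < (u * star v).re) (h1 : |(u * star v).im| ≤ (u * star v).re) :
    |((h * (a * u + b * v)) * star (b * u + a * v)).im|
      < ((h * (a * u + b * v)) * star (b * u + a * v)).re := by
  obtain ⟨q, hq⟩ : ∃ q, q = (1 - t) / (1 + t) := ⟨_, rfl⟩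
  rw [← hq] at hh
  have hq1 : q * (1 + t) = 1 - t := by rw [hq]; field_simp
  have hq0 : 0 < q := by rw [hq]; apply div_pos <;> linarith
  have hqlt : q < 1 := by nlinarith
  obtain ⟨δ, hδ⟩ : ∃ δ, δ = (1 - q) / 4 := ⟨_, rfl⟩
  rw [← hδ] at hh
  have hre := (Complex.abs_re_le_norm (h - 1)).trans_lt hh
  have him := (Complex.abs_im_le_norm (h - 1)).trans_lt hh
  simp only [Complex.sub_re, Complex.sub_im, Complex.one_re, Complex.one_im, sub_zero] at hre him
  have hbp : 0 < b := lt_of_lt_of_le (by positivity) hb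
  have hqab : a - b ≤ q * (a + b) := by
    have : (a - b) * (1 + t) ≤ q * (1 + t) * (a + b) := by rw [hq1]; nlinarith
    nlinarith
  obtain ⟨z, hz⟩ : ∃ z, z = (a * u + b * v) * star (b * u + a * v) := ⟨_, rfl⟩
  have hzre : z.re = a * b * (u.re ^ 2 + u.im ^ 2 + v.re ^ 2 + v.im ^ 2)
      + (a ^ 2 + b ^ 2) * (u * star v).re := by
    rw [hz]; simp; ring
  have hzim : z.im = (a ^ 2 - b ^ 2) * (u * star v).im := by
    rw [hz]; simp; ring
  have hx : 2 * (u * star v).re ≤ u.re ^ 2 + u.im ^ 2 + v.re ^ 2 + v.im ^ 2 := by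
    simp
    nlinarith [sq_nonneg (u.re - v.re), sq_nonneg (u.im - v.im)]
  have hX : (a + b) ^ 2 * (u * star v).re ≤ z.re := by
    rw [hzre]
    nlinarith [mul_le_mul_of_nonneg_left hx (mul_pos ha hbp).le]
  have hXp : 0 < z.re := lt_of_lt_of_le (by positivity) hX
  have hY : |z.im| ≤ q * z.re := by
    rw [hzim, abs_mul, abs_of_nonneg (by nlinarith)]
    calc (a ^ 2 - b ^ 2) * |(u * star v).im| ≤ (a ^ 2 - b ^ 2) * (u * star v).re :=
          mul_le_mul_of_nonneg_left h1 (by nlinarith)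
      _ = (a - b) * ((a + b) * (u * star v).re) := by ring
      _ ≤ (q * (a + b)) * ((a + b) * (u * star v).re) :=
          mul_le_mul_of_nonneg_right hqab (by positivity)
      _ = q * ((a + b) ^ 2 * (u * star v).re) := by ring
      _ ≤ q * z.re := mul_le_mul_of_nonneg_left hX hq0.le
  rw [mul_assoc, ← hz, Complex.mul_im, Complex.mul_re]
  have hp : 1 - δ < h.re := by have := (abs_lt.1 hre).1; linarith
  have hδ0 : 0 < δ := by rw [hδ]; linarith
  have hp0 : 0 < h.re := by linarith
  have e1 : |h.re * z.im + h.im * z.re| ≤ h.re * (q * z.re) + δ * z.re := by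
    refine (abs_add_le _ _).trans ?_
    rw [abs_mul, abs_mul, abs_of_pos hp0, abs_of_pos hXp]
    gcongr
  have e2 : h.im * z.im ≤ δ * z.re := by
    refine (le_abs_self _).trans ?_
    rw [abs_mul]
    have : |z.im| ≤ z.re := hY.trans (by nlinarith)
    gcongr
  have e3 : 2 * δ < h.re * (1 - q) := by nlinarith
  nlinarith [mul_lt_mul_of_pos_right e3 hXp]

theorem trace_ne (P : Matrix Bool Bool ℂ) (hP : ∀ v, inC v → inC' (P.mulVec v)) :
    P.trace ≠ 0 := by
  intro h0
  let w : Bool → ℂ := fun s => if s then 1 + Complex.I else 1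
  have hw : inC w := by simp [inC, w]
  have hw' : ¬ inC' w := by simp [inC', w]
  have h2 := hP _ (hP w hw).inC
  have h3 : P.mulVec (P.mulVec w) = (-P.det) • w := by
    rw [Matrix.mulVec_mulVec]
    have ht : P true true = - P false false := by
      simp [Matrix.trace] at h0
      linear_combination h0
    have hd : P.det = P true true * P false false - P true false * P false true := by
      rw [← Matrix.det_submatrix_equiv_self finTwoEquiv, Matrix.det_fin_two]
      simp [finTwoEquiv]
      ring
    rw [hd]
    funext s
    cases s <;> simp [Matrix.mulVec, dotProduct, Matrix.mul_apply, ht] <;> ring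
  rw [h3] at h2
  by_cases hd : -P.det = 0
  · rw [hd] at h2
    simp [inC'] at h2
  · exact hw' ((inC'_smul _ hd).1 h2)

theorem prM_cone (M : ℕ → Matrix Bool Bool ℂ) (hM : ∀ k v, inC v → inC' ((M k).mulVec v))
    (n : ℕ) : ∀ v, inC v → inC' ((prM M (n + 1)).mulVec v) := by
  induction n with
  | zero => intro v hv; simpa [prM] using hM 0 v hv
  | succ n ih =>
    intro v hv
    rw [prM, ← Matrix.mulVec_mulVec]
    exact ih _ (hM _ v hv).inC

/-- **Absence of phase transitions: a zero-free neighborhood of 1**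
(Theorem 1.2). Let `(J_j)_{j≥1}` be a bounded sequence of positive couplings
and `τ, k_B > 0`. Then there is an open neighborhood `𝒩 ⊆ ℂ` of `1` such that
for every `N ≥ 1` and every `H ∈ ℂ` with `e^{2H/(k_B τ)} ∈ 𝒩`, the partition
function `Z_τ^{(N)}(H)` is nonzero. -/
theorem ising_partition_zero_free_neighborhood
    (J : ℕ → ℝ) (hJ : ∀ j, 1 ≤ j → 0 < J j)
    (hJbd : ∃ K : ℝ, ∀ j, 1 ≤ j → J j ≤ K)
    (τ kB : ℝ) (hτ : 0 < τ) (hkB : 0 < kB) :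
    ∃ 𝒩 : Set ℂ, IsOpen 𝒩 ∧ (1 : ℂ) ∈ 𝒩 ∧
      ∀ N : ℕ, 1 ≤ N → ∀ H : ℂ,
        Complex.exp (2 * H / ((kB * τ : ℝ) : ℂ)) ∈ 𝒩 →
          isingZ N J kB τ H ≠ 0 := by
  obtain ⟨K, hK⟩ := hJbd
  have hβ : 0 < kB * τ := mul_pos hkB hτ
  have hK0 : 0 < K := (hJ 1 le_rfl).trans_le (hK 1 le_rfl)
  obtain ⟨t, ht⟩ : ∃ t, t = Real.exp (-(2 * K / (kB * τ))) := ⟨_, rfl⟩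
  have ht0 : 0 < t := ht ▸ Real.exp_pos _
  have ht1 : t < 1 := by
    rw [ht, Real.exp_lt_one_iff]
    have : 0 < 2 * K / (kB * τ) := by positivity
    linarith
  have hr : 0 < (1 - (1 - t) / (1 + t)) / 4 := by
    have : (1 - t) / (1 + t) < 1 := by rw [div_lt_one] <;> linarith
    linarith
  refine ⟨Metric.ball 1 ((1 - (1 - t) / (1 + t)) / 4), Metric.isOpen_ball,
    Metric.mem_ball_self hr, ?_⟩
  intro N hN H hH
  obtain ⟨n, rfl⟩ : ∃ n, N = n + 1 := ⟨N - 1, by omega⟩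
  rw [isingZ_trace]
  refine trace_ne _ (prM_cone _ ?_ n)
  intro k v hv
  rw [Metric.mem_ball, dist_eq_norm] at hH
  have hJk := hJ (k + 1) (by omega)
  have hKk := hK (k + 1) (by omega)
  have key := cone_step t (Real.exp (J (k + 1) / (kB * τ))) (Real.exp (-(J (k + 1) / (kB * τ))))
    ht0 ht1 (Real.exp_pos _)
    (by
      apply Real.exp_le_exp.2
      have : 0 < J (k + 1) / (kB * τ) := by positivity
      linarith)
    (by
      rw [ht, ← Real.exp_add]
      apply Real.exp_le_exp.2
      have : J (k + 1) / (kB * τ) ≤ K / (kB * τ) := by gcongr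
      rw [mul_div_assoc]
      linarith)
    _ hH (v true) (v false) hv.1 hv.2
  have hs : (trM J (1 / ((kB * τ : ℝ) : ℂ)) H k).mulVec v
      = Complex.exp (-(H / ((kB * τ : ℝ) : ℂ))) • (fun s : Bool => if s then
        Complex.exp (2 * H / ((kB * τ : ℝ) : ℂ)) *
          ((Real.exp (J (k + 1) / (kB * τ)) : ℝ) * v true
            + (Real.exp (-(J (k + 1) / (kB * τ))) : ℝ) * v false)
        else ((Real.exp (-(J (k + 1) / (kB * τ))) : ℝ) * v true
            + (Real.exp (J (k + 1) / (kB * τ)) : ℝ) * v false)) := by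
    funext s
    rw [Complex.ofReal_exp, Complex.ofReal_exp]
    generalize hB : ((kB * τ : ℝ) : ℂ) = B
    have hc : ((J (k + 1) / (kB * τ) : ℝ) : ℂ) = (J (k + 1) : ℂ) / B := by
      rw [← hB, Complex.ofReal_div]
    rw [Complex.ofReal_neg, hc]
    cases s
    · simp only [Matrix.mulVec, dotProduct, trM, spinC, Fintype.sum_bool, Pi.smul_apply,
        smul_eq_mul, mul_add, ← mul_assoc, ← Complex.exp_add, if_true, Bool.false_eq_true,
        if_false]
      congr 3 <;> ring
    · simp only [Matrix.mulVec, dotProduct, trM, spinC, Fintype.sum_bool, Pi.smul_apply,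
        smul_eq_mul, mul_add, ← mul_assoc, ← Complex.exp_add, if_true, Bool.false_eq_true,
        if_false]
      congr 3 <;> ring
  rw [hs, inC'_smul _ (Complex.exp_ne_zero _)]
  simpa only [inC', if_true, Bool.false_eq_true, if_false] using key
end
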